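/- Let a, b, c, d : ℝ → ℝ with a, c, d continuously differentiable, b continuous, a(t) ≠ 0 for all t, and Q(t) = 4ab + (a′/a − c − d)(c+d) − c′ − d′. Let λ(t) = exp(∫₀ᵗ(c(s) − d(s))ds) and let κ : ℝ → ℝ be twice continuously differentiable; set μ(t) := κ(t)·λ(t). Then κ satisfies the homogeneous auxiliary equation κ′′ − (a′/a)κ′ + Qκ = 0 if and only if μ satisfies the characteristic equation μ′′ − (a′/a + 2c − 2d)μ′ + 4(ab − cd + ca′/(2a) − c′/2)μ = 0. -/

import Mathlib

/-- λ(t) = exp(∫₀ᵗ (c(s) − d(s)) ds). -/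
noncomputable def lamFun (c d : ℝ → ℝ) (t : ℝ) : ℝ :=
  Real.exp (∫ s in (0:ℝ)..t, c s - d s)

/-- Q(t) = 4ab + (a′/a − c − d)(c+d) − c′ − d′. -/
noncomputable def Qfun (a b c d : ℝ → ℝ) (t : ℝ) : ℝ :=
  4 * a t * b t + (deriv a t / a t - c t - d t) * (c t + d t) - deriv c t - deriv d t

/-!
If `Λ' = ω Λ`, then differentiation conjugated by `Λ` is `D + ω`: `(κ Λ)' = (κ' + ω κ) Λ`.
Applying this twice turns `D² - (p + 2ω) D + q` acting on `κ Λ` into `Λ` times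
`D² - p D + (q - p ω + ω' - ω²)` acting on `κ`. The function `λ` satisfies `λ' = (c - d) λ` and
never vanishes, and for `ω = c - d`, `p = a'/a`, `q = 4σ` the transformed potential is exactly `Q`.
-/

section Conjugation

variable {𝕜 : Type*} [NontriviallyNormedField 𝕜] {κ Λ ω : 𝕜 → 𝕜}

theorem deriv_mul_of_hasDerivAt_mul_self {t : 𝕜} (hκ : DifferentiableAt 𝕜 κ t)
    (hΛ : HasDerivAt Λ (ω t * Λ t) t) :
    deriv (fun s => κ s * Λ s) t = (deriv κ t + ω t * κ t) * Λ t := by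
  rw [(hκ.hasDerivAt.fun_mul hΛ).deriv]
  ring

theorem deriv_deriv_mul_of_hasDerivAt_mul_self {t : 𝕜} (hκ : Differentiable 𝕜 κ)
    (hκ' : DifferentiableAt 𝕜 (deriv κ) t) (hω : DifferentiableAt 𝕜 ω t)
    (hΛ : ∀ s, HasDerivAt Λ (ω s * Λ s) s) :
    deriv (deriv fun s => κ s * Λ s) t =
      (deriv (deriv κ) t + 2 * ω t * deriv κ t + (deriv ω t + ω t ^ 2) * κ t) * Λ t := by
  have deriv_mul : (deriv fun s => κ s * Λ s) = fun s => (deriv κ s + ω s * κ s) * Λ s :=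
    funext fun s => deriv_mul_of_hasDerivAt_mul_self (hκ s) (hΛ s)
  have hωκ : DifferentiableAt 𝕜 (fun s => ω s * κ s) t := hω.fun_mul (hκ t)
  rw [deriv_mul, deriv_mul_of_hasDerivAt_mul_self (hκ'.fun_add hωκ) (hΛ t),
    deriv_fun_add hκ' hωκ, deriv_fun_mul hω (hκ t)]
  ring

theorem secondOrder_mul_of_hasDerivAt_mul_self {t : 𝕜} (p q : 𝕜) (hκ : Differentiable 𝕜 κ)
    (hκ' : DifferentiableAt 𝕜 (deriv κ) t) (hω : DifferentiableAt 𝕜 ω t)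
    (hΛ : ∀ s, HasDerivAt Λ (ω s * Λ s) s) :
    deriv (deriv fun s => κ s * Λ s) t - (p + 2 * ω t) * deriv (fun s => κ s * Λ s) t
        + q * (κ t * Λ t) =
      Λ t * (deriv (deriv κ) t - p * deriv κ t
        + (q - p * ω t + deriv ω t - ω t ^ 2) * κ t) := by
  rw [deriv_deriv_mul_of_hasDerivAt_mul_self hκ hκ' hω hΛ,
    deriv_mul_of_hasDerivAt_mul_self (hκ t) (hΛ t)]
  ring

end Conjugation

section QuadraticHamiltonian

variable {c d : ℝ → ℝ}

theorem lamFun_ne_zero (c d : ℝ → ℝ) (t : ℝ) : lamFun c d t ≠ 0 :=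
  Real.exp_ne_zero _

theorem hasDerivAt_lamFun (hc : Continuous c) (hd : Continuous d) (t : ℝ) :
    HasDerivAt (lamFun c d) ((c t - d t) * lamFun c d t) t := by
  rw [mul_comm]
  exact ((hc.sub hd).integral_hasStrictDerivAt 0 t).hasDerivAt.exp

theorem Qfun_eq_conjugated_potential (a b : ℝ → ℝ) {t : ℝ} (hc : DifferentiableAt ℝ c t)
    (hd : DifferentiableAt ℝ d t) :
    Qfun a b c d t =
      4 * (a t * b t - c t * d t + c t * deriv a t / (2 * a t) - deriv c t / 2)
        - deriv a t / a t * (c t - d t) + deriv (fun s => c s - d s) t - (c t - d t) ^ 2 := by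
  rw [Qfun, deriv_fun_sub hc hd]
  ring

theorem characteristic_mul_lamFun (a b : ℝ → ℝ) {κ : ℝ → ℝ} {t : ℝ} (hc : Continuous c)
    (hd : Continuous d) (hc' : DifferentiableAt ℝ c t) (hd' : DifferentiableAt ℝ d t)
    (hκ : Differentiable ℝ κ) (hκ' : DifferentiableAt ℝ (deriv κ) t) :
    deriv (deriv fun s => κ s * lamFun c d s) t
        - (deriv a t / a t + 2 * c t - 2 * d t) * deriv (fun s => κ s * lamFun c d s) t
        + 4 * (a t * b t - c t * d t + c t * deriv a t / (2 * a t) - deriv c t / 2)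
            * (κ t * lamFun c d t) =
      lamFun c d t *
        (deriv (deriv κ) t - deriv a t / a t * deriv κ t + Qfun a b c d t * κ t) := by
  have damping : deriv a t / a t + 2 * c t - 2 * d t = deriv a t / a t + 2 * (c t - d t) := by
    ring
  rw [damping, Qfun_eq_conjugated_potential a b hc' hd']
  exact secondOrder_mul_of_hasDerivAt_mul_self _ _ hκ hκ' (hc'.fun_sub hd')
    (hasDerivAt_lamFun hc hd)

end QuadraticHamiltonian

theorem statement_17_general
    (a b c d κ : ℝ → ℝ)
    (_ha : Differentiable ℝ a) (hc : Differentiable ℝ c) (hd : Differentiable ℝ d)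
    (_hane : ∀ t, a t ≠ 0)
    (hκ : Differentiable ℝ κ) (hκ' : Differentiable ℝ (deriv κ)) :
    (∀ t, deriv (deriv κ) t - (deriv a t / a t) * deriv κ t + Qfun a b c d t * κ t = 0)
      ↔
    (∀ t, deriv (deriv fun s => κ s * lamFun c d s) t
        - (deriv a t / a t + 2 * c t - 2 * d t)
            * deriv (fun s => κ s * lamFun c d s) t
        + 4 * (a t * b t - c t * d t + c t * deriv a t / (2 * a t) - deriv c t / 2)
            * (κ t * lamFun c d t) = 0) := by
  refine forall_congr' fun t => ?_
  rw [characteristic_mul_lamFun a b hc.continuous hd.continuous (hc t) (hd t) hκ (hκ' t),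
    mul_eq_zero_iff_left (lamFun_ne_zero c d t)]

/-- with μ(t) = κ(t)·λ(t), κ solves the homogeneous auxiliary equation
κ′′ − (a′/a)κ′ + Qκ = 0 if and only if μ solves the characteristic equation
μ′′ − (a′/a + 2c − 2d)μ′ + 4(ab − cd + ca′/(2a) − c′/2)μ = 0. -/
theorem statement_17
    (a b c d κ : ℝ → ℝ)
    (ha : ContDiff ℝ 1 a) (hc : ContDiff ℝ 1 c) (hd : ContDiff ℝ 1 d)
    (hb : Continuous b)
    (hane : ∀ t, a t ≠ 0)
    (hκ : ContDiff ℝ 2 κ) :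
    (∀ t, deriv (deriv κ) t - (deriv a t / a t) * deriv κ t + Qfun a b c d t * κ t = 0)
      ↔
    (∀ t, deriv (deriv fun s => κ s * lamFun c d s) t
        - (deriv a t / a t + 2 * c t - 2 * d t)
            * deriv (fun s => κ s * lamFun c d s) t
        + 4 * (a t * b t - c t * d t + c t * deriv a t / (2 * a t) - deriv c t / 2)
            * (κ t * lamFun c d t) = 0) :=
  statement_17_general a b c d κ ha.differentiable_one hc.differentiable_one
    hd.differentiable_one hane (hκ.differentiable two_ne_zero) hκ.differentiable_deriv_two
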